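/- Let (X, T) be an L-fuzzy topological space and G ∈ L^X. Then G is L-fuzzy SP-compact if and only if for every a ∈ M(L) and every b ∈ β*(a), every Q_a-cover U of G with T_sp(F) ≥ a for each F ∈ U has a finite subfamily V ⊆ U which is a strong β_b-cover of G. -/

import Mathlib

/-!
Two facts about a completely distributive lattice carry the proof. Writing `b ≪ a` for `wayBelow`,
every element is the supremum of the elements `≪`-below it (`exists_wayBelow_not_le`), hence `≪`
interpolates (`wayBelow_interpolate`); and every element is the supremum of the coprimes below it
(`exists_coprime_not_le`), hence of the coprimes `≪`-below it.

If `G` is SP-compact and `U` is a `Q_a`-cover with `T_sp ≥ a` on `U`, then the left-hand side of the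
compactness inequality is at least `a`. For `b ≪ d ≪ a`, some finite `V ⊆ U` therefore has
`d ≤ ⨅ x, G'(x) ⊔ ⨆ F ∈ V, F x`, which makes `V` a strong `β_b`-cover. Conversely, if the compactness
inequality fails for `P`, coprimes `b ≪ a` can be chosen with `a` below its left-hand side and `b`
not below its right-hand side; then `P` is a `Q_a`-cover, and a finite strong `β_b`-subcover puts `b`
below the right-hand side after all.
-/

/-!
Common definitions: completely distributive complete lattice `L` with an
order-reversing involution `c`, `L`-subsets `X → L`, the wayBelow relation `≪`,
coprime/prime elements, `L`-(fuzzy) topologies, closure/interior, (Semi-)Preopen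
subsets, the `L`-fuzzy Preopen and Semi-Preopen operators, and the various
compactness / cover / shading / remote-family notions.
-/

variable {L : Type*} [CompletelyDistribLattice L] {X : Type*}

/-- `a ≪ b`: for every subset `D ⊆ L` with `b ≤ sSup D` there is `d ∈ D` with `a ≤ d`. -/
def wayBelow (a b : L) : Prop := ∀ D : Set L, b ≤ sSup D → ∃ d ∈ D, a ≤ d

/-- coprime (non-zero) element of `L`; `M(L)` is the set of such elements. -/
def IsCoprimeElem (a : L) : Prop := a ≠ ⊥ ∧ ∀ p q : L, a ≤ p ⊔ q → a ≤ p ∨ a ≤ q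

/-- prime (non-unit) element of `L`; `P(L)` is the set of such elements. -/
def IsPrimeElem (p : L) : Prop := p ≠ ⊤ ∧ ∀ a b : L, a ⊓ b ≤ p → a ≤ p ∨ b ≤ p

/-- pointwise complement of an `L`-subset via the involution `c`. -/
def pcompl (c : L → L) (A : X → L) : X → L := fun x => c (A x)

/-- `T : L^X → L` is an `L`-fuzzy topology. -/
def IsLFuzzyTopology (T : (X → L) → L) : Prop :=
  T ⊥ = ⊤ ∧ T ⊤ = ⊤ ∧ (∀ A B : X → L, T A ⊓ T B ≤ T (A ⊓ B)) ∧
    (∀ S : Set (X → L), (⨅ A ∈ S, T A) ≤ T (sSup S))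

/-- `τ ⊆ L^X` is an `L`-topology. -/
def IsLTopology (τ : Set (X → L)) : Prop :=
  ⊥ ∈ τ ∧ ⊤ ∈ τ ∧ (∀ S : Set (X → L), S ⊆ τ → sSup S ∈ τ) ∧
    (∀ A B : X → L, A ∈ τ → B ∈ τ → A ⊓ B ∈ τ)

/-- closure in an `L`-topological space: infimum of all closed `L`-subsets above `A`. -/
def lcl (c : L → L) (τ : Set (X → L)) (A : X → L) : X → L :=
  sInf {K : X → L | pcompl c K ∈ τ ∧ A ≤ K}

/-- interior in an `L`-topological space: supremum of all open `L`-subsets below `A`. -/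
def lint (τ : Set (X → L)) (A : X → L) : X → L :=
  sSup {U : X → L | U ∈ τ ∧ U ≤ A}

/-- `A` is Preopen: `A ≤ int (cl A)`. -/
def IsPreopen (c : L → L) (τ : Set (X → L)) (A : X → L) : Prop :=
  A ≤ lint τ (lcl c τ A)

/-- `A` is Semi-Preopen: there is a Preopen `B` with `B ≤ A ≤ cl B`. -/
def IsSemiPreopen (c : L → L) (τ : Set (X → L)) (A : X → L) : Prop :=
  ∃ B : X → L, IsPreopen c τ B ∧ B ≤ A ∧ A ≤ lcl c τ B

/-- the `L`-fuzzy Preopen operator `T_p` induced by `T`. -/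
def preopenOp (c : L → L) (T : (X → L) → L) (A : X → L) : L :=
  ⨅ x : X, ⨅ lam : L, ⨅ _ : wayBelow lam (A x),
    ⨆ B : X → L, ⨆ _ : wayBelow lam (B x),
      (T B ⊓ ⨅ y : X, ⨅ mu : L, ⨅ _ : wayBelow mu (B y),
        ⨅ D : X → L, ⨅ _ : A ≤ D, ⨅ _ : ¬ mu ≤ D y, c (T (pcompl c D)))

/-- the `L`-fuzzy Semi-Preopen operator `T_sp` induced by `T`. -/
def spOp (c : L → L) (T : (X → L) → L) (A : X → L) : L :=
  ⨆ B : X → L, ⨆ _ : B ≤ A,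
    (preopenOp c T B ⊓ ⨅ x : X, ⨅ lam : L, ⨅ _ : wayBelow lam (A x),
      ⨅ D : X → L, ⨅ _ : B ≤ D, ⨅ _ : ¬ lam ≤ D x, c (T (pcompl c D)))

/-- `G` is `L`-fuzzy SP-compact in the `L`-fuzzy topological space `(X, T)`. -/
def LFuzzySPCompact (c : L → L) (T : (X → L) → L) (G : X → L) : Prop :=
  ∀ P : Set (X → L),
    (⨅ F ∈ P, spOp c T F) ⊓ (⨅ x : X, c (G x) ⊔ ⨆ F ∈ P, F x) ≤
      ⨆ Q : Finset (X → L), ⨆ _ : ↑Q ⊆ P, ⨅ x : X, c (G x) ⊔ ⨆ F ∈ Q, F x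

/-- `G` is fuzzy SP-compact in the `L`-topological space `(X, τ)`. -/
def FuzzySPCompact (c : L → L) (τ : Set (X → L)) (G : X → L) : Prop :=
  ∀ U : Set (X → L), (∀ A ∈ U, IsSemiPreopen c τ A) →
    (⨅ x : X, c (G x) ⊔ ⨆ A ∈ U, A x) ≤
      ⨆ ψ : Finset (X → L), ⨆ _ : ↑ψ ⊆ U, ⨅ x : X, c (G x) ⊔ ⨆ A ∈ ψ, A x

/-- `U` is a `Q_a`-cover of `G`. -/
def QCover (c : L → L) (a : L) (G : X → L) (U : Set (X → L)) : Prop :=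
  ∀ x : X, a ≤ c (G x) ⊔ ⨆ A ∈ U, A x

/-- `U` is a strong `β_a`-cover of `G`. -/
def StrongBetaCover (c : L → L) (a : L) (G : X → L) (U : Set (X → L)) : Prop :=
  wayBelow a (⨅ x : X, c (G x) ⊔ ⨆ A ∈ U, A x)

/-- `P` is a strong `a`-remote family of `G`. -/
def StrongRemote (a : L) (G : X → L) (P : Set (X → L)) : Prop :=
  ¬ a ≤ ⨆ x : X, G x ⊓ ⨅ B ∈ P, B x

/-- `U` is a strong `a`-shading of `G`. -/
def StrongShading (c : L → L) (a : L) (G : X → L) (U : Set (X → L)) : Prop :=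
  ¬ (⨅ x : X, c (G x) ⊔ ⨆ A ∈ U, A x) ≤ a

/-- `G` is `a`-fuzzy SP-compact in the `L`-topological space `(X, τ)`. -/
def AFuzzySPCompact (c : L → L) (τ : Set (X → L)) (a : L) (G : X → L) : Prop :=
  ∀ b : L, wayBelow b a →
    ∀ U : Set (X → L), (∀ A ∈ U, IsSemiPreopen c τ A) → QCover c a G U →
      ∃ V : Finset (X → L), ↑V ⊆ U ∧ QCover c b G ↑V

theorem wayBelow.le {a b : L} (h : wayBelow a b) : a ≤ b := by
  obtain ⟨d, hd, hle⟩ := h {b} (by simp)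
  rwa [Set.mem_singleton_iff.1 hd] at hle

theorem wayBelow.mono {a b x y : L} (h : wayBelow a b) (hx : x ≤ a) (hy : b ≤ y) :
    wayBelow x y := by
  intro D hD
  obtain ⟨d, hd, hle⟩ := h D (hy.trans hD)
  exact ⟨d, hd, hx.trans hle⟩

/-- Every element is the supremum of the elements `≪`-below it: apply complete distributivity to
the family of all sets whose supremum is above `a`. -/
theorem exists_wayBelow_not_le {a t : L} (h : ¬ a ≤ t) : ∃ b, wayBelow b a ∧ ¬ b ≤ t := by
  by_contra! hcon
  apply h
  have h1 : a ≤ ⨅ D : {D : Set L // a ≤ sSup D}, ⨆ d : D.1, (d : L) := by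
    refine le_iInf fun D => ?_
    rw [← sSup_eq_iSup']
    exact D.2
  rw [iInf_iSup_eq] at h1
  refine h1.trans (iSup_le fun g => hcon _ fun D hD => ?_)
  exact ⟨g ⟨D, hD⟩, (g ⟨D, hD⟩).2, iInf_le (fun D => ((g D : D.1) : L)) ⟨D, hD⟩⟩

theorem wayBelow_interpolate {a b : L} (h : wayBelow b a) :
    ∃ d, wayBelow b d ∧ wayBelow d a := by
  have key : a ≤ sSup {e : L | ∃ d, wayBelow e d ∧ wayBelow d a} := by
    by_contra hn
    obtain ⟨d, hda, hd⟩ := exists_wayBelow_not_le hn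
    obtain ⟨e, hed, he⟩ := exists_wayBelow_not_le hd
    exact he (le_sSup ⟨d, hed, hda⟩)
  obtain ⟨e, ⟨d, hed, hda⟩, hbe⟩ := h _ key
  exact ⟨d, hed.mono hbe le_rfl, hda⟩

/-- If `a ≰ s`, then `s` can be enlarged to some `s'` that is way above it (`≪` in the order dual)
and still satisfies `a ≰ s'`. -/
theorem exists_wayAbove_not_le {a s : L} (h : ¬ a ≤ s) :
    ∃ s' : L, (∀ D : Set L, sInf D ≤ s → ∃ d ∈ D, d ≤ s') ∧ ¬ a ≤ s' := by
  obtain ⟨b, hb, hn⟩ := exists_wayBelow_not_le (L := Lᵒᵈ)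
    (a := OrderDual.toDual s) (t := OrderDual.toDual a) h
  exact ⟨OrderDual.ofDual b, fun D hD => hb D hD, hn⟩

/-- Every element is the supremum of the coprimes below it. Iterating `exists_wayAbove_not_le` from
`t` gives an increasing sequence whose lower closure is an ideal `I` that contains `t` but not `a`,
and whose complement is closed under infima of chains. A minimal element of the complement below
`a` is coprime, since a proper decomposition `p = (p ⊓ x) ⊔ (p ⊓ y)` would put `p` into `I`. -/
theorem exists_coprime_not_le {a t : L} (h : ¬ a ≤ t) :
    ∃ p, IsCoprimeElem p ∧ p ≤ a ∧ ¬ p ≤ t := by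
  choose f hf hfa using fun s : {s : L // ¬ a ≤ s} => exists_wayAbove_not_le s.2
  let u : ℕ → {s : L // ¬ a ≤ s} :=
    fun n => Nat.rec (motive := fun _ => {s : L // ¬ a ≤ s}) ⟨t, h⟩ (fun _ s => ⟨f s, hfa s⟩) n
  have hu : ∀ n, ∀ D : Set L, sInf D ≤ (u n).1 → ∃ d ∈ D, d ≤ (u (n + 1)).1 :=
    fun n D hD => hf (u n) D hD
  have hmono : Monotone fun n => (u n : L) := by
    refine monotone_nat_of_le_succ fun n => ?_
    obtain ⟨d, hd, hle⟩ := hu n {(u n : L)} (by simp)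
    rwa [Set.mem_singleton_iff.1 hd] at hle
  obtain ⟨p, hpa, hp⟩ := zorn_le_nonempty₀ (α := Lᵒᵈ) {y : Lᵒᵈ | ∀ n, ¬ OrderDual.ofDual y ≤ u n}
    (by
      intro C hC hchain y hy
      refine ⟨sSup C, ?_, fun z hz => le_sSup hz⟩
      intro n hn
      obtain ⟨d, hd, hle⟩ := hu n C hn
      exact hC hd (n + 1) hle)
    (OrderDual.toDual a) (fun n => (u n).2)
  have hmin : ∀ y : L, y ≤ OrderDual.ofDual p → ¬ OrderDual.ofDual p ≤ y → ∃ n, y ≤ u n := by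
    intro y hy hny
    by_contra! hcon
    exact hny (hp.2 (y := OrderDual.toDual y) hcon hy)
  have hqa : OrderDual.ofDual p ≤ a := hpa
  have hpn : ∀ n, ¬ OrderDual.ofDual p ≤ (u n : L) := hp.1
  generalize OrderDual.ofDual p = q at *
  refine ⟨q, ⟨?_, ?_⟩, hqa, hpn 0⟩
  · rintro rfl
    exact hpn 0 bot_le
  · intro x y hxy
    by_contra! hcon
    obtain ⟨m, hm⟩ := hmin (q ⊓ x) inf_le_left fun hle => hcon.1 (hle.trans inf_le_right)
    obtain ⟨n, hn⟩ := hmin (q ⊓ y) inf_le_left fun hle => hcon.2 (hle.trans inf_le_right)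
    apply hpn (max m n)
    calc q = q ⊓ (x ⊔ y) := (inf_eq_left.2 hxy).symm
      _ = q ⊓ x ⊔ q ⊓ y := inf_sup_left _ _ _
      _ ≤ _ := sup_le (hm.trans (hmono (le_max_left m n))) (hn.trans (hmono (le_max_right m n)))

theorem stmt10 (c : L → L) (hc_inv : ∀ a : L, c (c a) = a)
    (hc_anti : ∀ a b : L, a ≤ b → c b ≤ c a) (T : (X → L) → L) (hT : IsLFuzzyTopology T) (G : X → L) :
    LFuzzySPCompact c T G ↔
      ∀ a : L, IsCoprimeElem a → ∀ b : L, wayBelow b a → IsCoprimeElem b →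
        ∀ U : Set (X → L), QCover c a G U → (∀ F ∈ U, a ≤ spOp c T F) →
          ∃ V : Finset (X → L), ↑V ⊆ U ∧ StrongBetaCover c b G ↑V := by
  constructor
  · intro hG a _ b hba _ U hU hUa
    obtain ⟨d, hbd, hda⟩ := wayBelow_interpolate hba
    have h1 : a ≤ ⨆ Q : Finset (X → L), ⨆ _ : ↑Q ⊆ U, ⨅ x : X, c (G x) ⊔ ⨆ F ∈ Q, F x :=
      (le_inf (le_iInf₂ hUa) (le_iInf hU)).trans (hG U)
    obtain ⟨_, ⟨Q, hQ, rfl⟩, hle⟩ := hda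
      ((fun Q : Finset (X → L) => ⨅ x : X, c (G x) ⊔ ⨆ F ∈ Q, F x) ''
        {Q : Finset (X → L) | ↑Q ⊆ U}) (by rw [sSup_image]; exact h1)
    exact ⟨Q, hQ, hbd.mono le_rfl hle⟩
  · intro H P
    by_contra hn
    obtain ⟨a, ha, haP, han⟩ := exists_coprime_not_le hn
    obtain ⟨e, hea, hen⟩ := exists_wayBelow_not_le han
    obtain ⟨b, hb, hbe, hbn⟩ := exists_coprime_not_le hen
    obtain ⟨V, hV, hVb⟩ := H a ha b (hea.mono hbe le_rfl) hb P
      (fun x => (haP.trans inf_le_right).trans (iInf_le _ x))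
      (fun F hF => (haP.trans inf_le_left).trans (iInf₂_le F hF))
    exact hbn (hVb.le.trans
      (le_iSup₂ (f := fun (Q : Finset (X → L)) (_ : ↑Q ⊆ P) =>
        ⨅ x : X, c (G x) ⊔ ⨆ F ∈ Q, F x) V hV))
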